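/- Let K be a number field, λ a nonzero prime ideal of O_K lying above 3 with e = v_λ(3), p a prime with p > 2e, and (a,b,c) ∈ O_K³ a nontrivial primitive solution of a^p + b^p = c^3 such that λ divides bO_K. Then v_λ(c₄(E)) = 4e and v_λ(Δ_E) = 3e + 3p·v_λ(b), where E = E_{a,b,c} is the Frey curve. -/

import Mathlib

/-!
The standard formulas give `c₄(E) = 9c(9c³ - 8bᵖ)` and, using `aᵖ = c³ - bᵖ`,
`Δ_E = 27 aᵖ b³ᵖ`. Since `λ ∣ b` and `a, b, c` are pairwise coprime, `a` and `c` are prime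
to `λ`, so additivity of the valuation gives `v(Δ_E) = 3e + 3p·v(b)`. For `c₄`, the term
`9c³` has valuation `2e` while `8bᵖ` has valuation at least `p > 2e`; hence the bracket has
valuation exactly `2e`, and `v(c₄) = 2e + 0 + 2e`.
-/

open NumberField

/-- The Frey curve `Y² + 3cXY + bᵖY = X³` associated to a solution of `aᵖ + bᵖ = c³`. -/
def FreyCurve {R : Type*} [CommRing R] (a b c : R) (p : ℕ) : WeierstrassCurve R :=
  { a₁ := 3 * c, a₂ := 0, a₃ := b ^ p, a₄ := 0, a₆ := 0 }

/-- The `q`-adic valuation of a nonzero element `x` of the ring of integers of a number field: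
the multiplicity of the prime ideal `q` in the principal ideal generated by `x`. -/
noncomputable def idealVal {K : Type*} [Field K] [NumberField K]
    (q : Ideal (𝓞 K)) (x : 𝓞 K) : ℕ :=
  multiplicity q (Ideal.span {x})

section idealVal

variable {K : Type*} [Field K] [NumberField K] {q : Ideal (𝓞 K)}

lemma finiteMultiplicity_span (hq : Prime q) {x : 𝓞 K} (hx : x ≠ 0) :
    FiniteMultiplicity q (Ideal.span {x}) :=
  FiniteMultiplicity.of_prime_left hq (by simpa using hx)

lemma idealVal_mul (hq : Prime q) {x y : 𝓞 K} (hx : x ≠ 0) (hy : y ≠ 0) :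
    idealVal q (x * y) = idealVal q x + idealVal q y := by
  unfold idealVal
  rw [← Ideal.span_singleton_mul_span_singleton]
  refine multiplicity_mul hq ?_
  rw [Ideal.span_singleton_mul_span_singleton]
  exact finiteMultiplicity_span hq (mul_ne_zero hx hy)

lemma idealVal_pow (hq : Prime q) {x : 𝓞 K} (hx : x ≠ 0) (n : ℕ) :
    idealVal q (x ^ n) = n * idealVal q x := by
  unfold idealVal
  rw [← Ideal.span_singleton_pow]
  exact (finiteMultiplicity_span hq hx).multiplicity_pow hq

lemma idealVal_eq_of_mem {x : 𝓞 K} {n : ℕ} (h : x ∈ q ^ n) (h' : x ∉ q ^ (n + 1)) :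
    idealVal q x = n :=
  multiplicity_eq_of_dvd_of_not_dvd (Ideal.dvd_span_singleton.2 h)
    (fun hd => h' (Ideal.dvd_span_singleton.1 hd))

lemma idealVal_eq_zero {x : 𝓞 K} (h : x ∉ q) : idealVal q x = 0 :=
  idealVal_eq_of_mem (by simp) (by simpa using h)

lemma mem_pow_idealVal (x : 𝓞 K) : x ∈ q ^ idealVal q x :=
  Ideal.dvd_span_singleton.1 (pow_multiplicity_dvd _ _)

lemma notMem_pow_idealVal_succ (hq : Prime q) {x : 𝓞 K} (hx : x ≠ 0) :
    x ∉ q ^ (idealVal q x + 1) := fun h =>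
  (finiteMultiplicity_span hq hx).not_pow_dvd_of_multiplicity_lt (Nat.lt_succ_self _)
    (Ideal.dvd_span_singleton.2 h)

/-- The equality case of the ultrametric inequality: a summand of strictly larger valuation
does not affect the valuation of a sum. -/
lemma idealVal_sub_of_mem (hq : Prime q) {x y : 𝓞 K} (hx : x ≠ 0)
    (hy : y ∈ q ^ (idealVal q x + 1)) : idealVal q (x - y) = idealVal q x := by
  refine idealVal_eq_of_mem
    (sub_mem (mem_pow_idealVal x) (Ideal.pow_le_pow_right (Nat.le_succ _) hy)) fun h => ?_
  exact notMem_pow_idealVal_succ hq hx (by simpa using add_mem h hy)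

end idealVal

lemma notMem_of_isCoprime {R : Type*} [CommRing R] {q : Ideal R} (hq : q ≠ ⊤) {x y : R}
    (hxy : IsCoprime x y) (hx : x ∈ q) : y ∉ q := by
  rintro hy
  obtain ⟨u, v, huv⟩ := hxy
  exact hq ((Ideal.eq_top_iff_one q).2
    (huv ▸ add_mem (q.mul_mem_left u hx) (q.mul_mem_left v hy)))

lemma FreyCurve_c₄ {R : Type*} [CommRing R] (a b c : R) (p : ℕ) :
    (FreyCurve a b c p).c₄ = 3 ^ 2 * c * (3 ^ 2 * c ^ 3 - 8 * b ^ p) := by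
  simp only [FreyCurve, WeierstrassCurve.c₄, WeierstrassCurve.b₂, WeierstrassCurve.b₄]
  ring

lemma FreyCurve_Δ {R : Type*} [CommRing R] {a b c : R} {p : ℕ} (h : a ^ p + b ^ p = c ^ 3) :
    (FreyCurve a b c p).Δ = 3 ^ 3 * a ^ p * (b ^ p) ^ 3 := by
  simp only [FreyCurve, WeierstrassCurve.Δ, WeierstrassCurve.b₂, WeierstrassCurve.b₄,
    WeierstrassCurve.b₆, WeierstrassCurve.b₈]
  linear_combination (-27 * (b ^ p) ^ 3) * h

/-- Let `λ` be a nonzero prime ideal of the ring of integers of a number field `K` lying above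
`3`, with ramification index `e = v_λ(3)`, let `p > 2e` be a prime, and let `(a,b,c)` be a
nontrivial primitive solution of `aᵖ + bᵖ = c³` with `λ ∣ b𝓞 K`.  Then the Frey curve
`E = E_{a,b,c}` satisfies `v_λ(c₄(E)) = 4e` and `v_λ(Δ_E) = 3e + 3p·v_λ(b)`. -/
theorem frey_valuation_at_lambda {K : Type*} [Field K] [NumberField K]
    (lam : Ideal (𝓞 K)) (hlam : lam.IsPrime) (hlam0 : lam ≠ ⊥)
    (hlam3 : (3 : 𝓞 K) ∈ lam)
    (e : ℕ) (he : e = idealVal lam (3 : 𝓞 K))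
    (p : ℕ) (hp : p.Prime) (hpe : 2 * e < p)
    (a b c : 𝓞 K) (habc : a * b * c ≠ 0)
    (hab : IsCoprime a b) (hac : IsCoprime a c) (hbc : IsCoprime b c)
    (h : a ^ p + b ^ p = c ^ 3)
    (hb : lam ∣ Ideal.span {b}) :
    idealVal lam (FreyCurve a b c p).c₄ = 4 * e ∧
    idealVal lam (FreyCurve a b c p).Δ = 3 * e + 3 * p * idealVal lam b := by
  have hq : Prime lam := Ideal.prime_of_isPrime hlam0 hlam
  have hbm : b ∈ lam := Ideal.dvd_span_singleton.1 hb
  have hva : idealVal lam a = 0 :=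
    idealVal_eq_zero (notMem_of_isCoprime hlam.ne_top hab.symm hbm)
  have hvc : idealVal lam c = 0 :=
    idealVal_eq_zero (notMem_of_isCoprime hlam.ne_top hbc hbm)
  have hc0 : c ≠ 0 := right_ne_zero_of_mul habc
  have ha0 : a ≠ 0 := left_ne_zero_of_mul (left_ne_zero_of_mul habc)
  have hb0 : b ≠ 0 := right_ne_zero_of_mul (left_ne_zero_of_mul habc)
  have h3 : (3 : 𝓞 K) ≠ 0 := by norm_num
  constructor
  · have hx0 : (3 : 𝓞 K) ^ 2 * c ^ 3 ≠ 0 := mul_ne_zero (pow_ne_zero _ h3) (pow_ne_zero _ hc0)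
    have hvx : idealVal lam ((3 : 𝓞 K) ^ 2 * c ^ 3) = 2 * e := by
      rw [idealVal_mul hq (pow_ne_zero _ h3) (pow_ne_zero _ hc0), idealVal_pow hq h3,
        idealVal_pow hq hc0, hvc, ← he, mul_zero, add_zero]
    have hy : 8 * b ^ p ∈ lam ^ (2 * e + 1) :=
      Ideal.mul_mem_left _ _ (Ideal.pow_le_pow_right hpe (Ideal.pow_mem_pow hbm p))
    have hvs : idealVal lam ((3 : 𝓞 K) ^ 2 * c ^ 3 - 8 * b ^ p) = 2 * e := by
      rw [idealVal_sub_of_mem hq hx0 (by rwa [hvx]), hvx]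
    have hs0 : (3 : 𝓞 K) ^ 2 * c ^ 3 - 8 * b ^ p ≠ 0 := by
      intro h0
      refine notMem_pow_idealVal_succ hq hx0 ?_
      rw [hvx, sub_eq_zero.1 h0]
      exact hy
    rw [FreyCurve_c₄, idealVal_mul hq (mul_ne_zero (pow_ne_zero _ h3) hc0) hs0,
      idealVal_mul hq (pow_ne_zero _ h3) hc0, idealVal_pow hq h3, hvc, hvs, ← he]
    ring
  · rw [FreyCurve_Δ h, idealVal_mul hq
        (mul_ne_zero (pow_ne_zero _ h3) (pow_ne_zero _ ha0)) (pow_ne_zero _ (pow_ne_zero _ hb0)),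
      idealVal_mul hq (pow_ne_zero _ h3) (pow_ne_zero _ ha0), idealVal_pow hq h3,
      idealVal_pow hq ha0, idealVal_pow hq (pow_ne_zero _ hb0), idealVal_pow hq hb0, hva, ← he]
    ring
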